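/- arXiv:1806.07107 — 6 statements merged into one kernel-verified Lean document; each statement's English description precedes it below -/
import Mathlib

section
/- Let p be a prime and let f be a nonzero Laurent polynomial over F_p in two variables all of whose line polynomial factors are in the same direction. If c : ℤ² → F_p is annihilated by f and has low complexity, i.e., there is a finite nonempty set D ⊆ ℤ² such that the number of distinct D-patterns of c is at most |D|, then c is periodic. -/
/-- Laurent polynomials over `R` in two variables: finitely supported functions
`ℤ² → R`, multiplied by convolution. -/
abbrev LP (R : Type*) [CommRing R] := AddMonoidAlgebra R (ℤ × ℤ)

/-- `f` annihilates the configuration `c` if the formal product of `f` with the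
power series of `c` is the zero power series. -/
def Annihilates {R : Type*} [CommRing R] (f : LP R) (c : ℤ × ℤ → R) : Prop :=
  ∀ n : ℤ × ℤ, ∑ m ∈ f.coeff.support, f.coeff m * c (n - m) = 0

/-- The set of `D`-patterns of `c`. -/
def Patterns {R : Type*} (c : ℤ × ℤ → R) (D : Finset (ℤ × ℤ)) : Set (D → R) :=
  Set.range fun t : ℤ × ℤ => fun d : D => c (t + d.1)

/-- `c` has low complexity with respect to some finite nonempty shape. -/
def LowComplexity {R : Type*} (c : ℤ × ℤ → R) : Prop :=
  ∃ D : Finset (ℤ × ℤ), D.Nonempty ∧ (Patterns c D).ncard ≤ D.card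

/-- `t` is a period vector of `c`. -/
def IsPeriodVector {R : Type*} (c : ℤ × ℤ → R) (t : ℤ × ℤ) : Prop :=
  t ≠ 0 ∧ ∀ n : ℤ × ℤ, c (n + t) = c n

/-- `c` is periodic. -/
def Periodic {R : Type*} (c : ℤ × ℤ → R) : Prop :=
  ∃ t : ℤ × ℤ, IsPeriodVector c t

/-- `c` is two-periodic: it has two linearly independent period vectors. -/
def TwoPeriodic {R : Type*} (c : ℤ × ℤ → R) : Prop :=
  ∃ t₁ t₂ : ℤ × ℤ, IsPeriodVector c t₁ ∧ IsPeriodVector c t₂ ∧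
    t₁.1 * t₂.2 - t₁.2 * t₂.1 ≠ 0

/-- `f` is a line polynomial in direction `u`: its support has at least two elements
and lies on a line `{n + r • u : r ∈ ℚ}`. -/
def IsLinePoly {R : Type*} [CommRing R] (u : ℤ × ℤ) (f : LP R) : Prop :=
  1 < f.coeff.support.card ∧ ∃ n : ℤ × ℤ, ∀ m ∈ f.coeff.support, ∃ r : ℚ,
    (m.1 : ℚ) = n.1 + r * u.1 ∧ (m.2 : ℚ) = n.2 + r * u.2

/-- A finite set `D ⊆ ℤ²` has an outer edge perpendicular to `v`. -/
def HasOuterEdge (D : Finset (ℤ × ℤ)) (v : ℤ × ℤ) : Prop :=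
  ∃ x ∈ D, (∀ y ∈ D, 0 ≤ (y.1 - x.1) * v.1 + (y.2 - x.2) * v.2) ∧
    ∃ y₁ ∈ D, ∃ y₂ ∈ D, y₁ ≠ y₂ ∧
      (y₁.1 - x.1) * v.1 + (y₁.2 - x.2) * v.2 = 0 ∧
      (y₂.1 - x.1) * v.1 + (y₂.2 - x.2) * v.2 = 0

/-- the monomial with exponent `t` -/
noncomputable def mon (R : Type*) [CommRing R] (t : ℤ × ℤ) : LP R := AddMonoidAlgebra.single t 1

lemma mon_add {R : Type*} [CommRing R] (s t : ℤ × ℤ) : mon R (s + t) = mon R s * mon R t := by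
  simp [mon, AddMonoidAlgebra.single_mul_single]

lemma mon_zero {R : Type*} [CommRing R] : mon R 0 = 1 := rfl

lemma mon_nsmul {R : Type*} [CommRing R] (n : ℕ) (t : ℤ × ℤ) : mon R (n • t) = mon R t ^ n := by
  simp [mon, AddMonoidAlgebra.single_pow]

lemma mon_neg_mul {R : Type*} [CommRing R] (t : ℤ × ℤ) : mon R (-t) * mon R t = 1 := by
  rw [← mon_add, neg_add_cancel, mon_zero]

/-- the shift endomorphisms -/
def shiftHom (R : Type*) [CommRing R] :
    Multiplicative (ℤ × ℤ) →* Module.End R (ℤ × ℤ → R) where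
  toFun t := { toFun := fun c n => c (n - t.toAdd), map_add' := fun _ _ => rfl,
               map_smul' := fun _ _ => rfl }
  map_one' := by ext c n; simp
  map_mul' s t := by
    apply LinearMap.ext
    intro c
    funext n
    simp [sub_sub]

/-- the action of Laurent polynomials on configurations -/
noncomputable def act (R : Type*) [CommRing R] : LP R →ₐ[R] Module.End R (ℤ × ℤ → R) :=
  AddMonoidAlgebra.lift R _ _ (shiftHom R)

lemma act_single {R : Type*} [CommRing R] (t : ℤ × ℤ) (a : R) (c : ℤ × ℤ → R) (n : ℤ × ℤ) :
    act R (AddMonoidAlgebra.single t a) c n = a * c (n - t) := by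
  simp [act, shiftHom]

lemma act_mon {R : Type*} [CommRing R] (t : ℤ × ℤ) (c : ℤ × ℤ → R) (n : ℤ × ℤ) :
    act R (mon R t) c n = c (n - t) := by
  simp [mon, act_single]

lemma act_apply {R : Type*} [CommRing R] (f : LP R) (c : ℤ × ℤ → R) (n : ℤ × ℤ) :
    act R f c n = ∑ m ∈ f.coeff.support, f.coeff m * c (n - m) := by
  conv_lhs => rw [← AddMonoidAlgebra.sum_coeff_single f, Finsupp.sum]
  rw [map_sum, LinearMap.sum_apply, Finset.sum_apply]
  simp [act_single]

lemma annihilates_iff {R : Type*} [CommRing R] (f : LP R) (c : ℤ × ℤ → R) :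
    Annihilates f c ↔ act R f c = 0 := by
  simp only [Annihilates, funext_iff, act_apply, Pi.zero_apply]

/-- the annihilator ideal -/
noncomputable def annI {R : Type*} [CommRing R] (c : ℤ × ℤ → R) : Ideal (LP R) where
  carrier := {f | act R f c = 0}
  zero_mem' := by simp
  add_mem' {f g} hf hg := by
    simp only [Set.mem_ofPred_eq] at *
    simp [hf, hg]
  smul_mem' f g hg := by
    simp only [Set.mem_ofPred_eq] at *
    simp [hg]

lemma mem_annI {R : Type*} [CommRing R] {c : ℤ × ℤ → R} {f : LP R} :
    f ∈ annI c ↔ act R f c = 0 := Iff.rfl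

/-- exponents `t` with `X^t - 1` in the ideal `I` -/
noncomputable def perI {R : Type*} [CommRing R] (I : Ideal (LP R)) : AddSubgroup (ℤ × ℤ) where
  carrier := {t | mon R t - 1 ∈ I}
  zero_mem' := by simp [mon_zero]
  add_mem' {s t} hs ht := by
    simp only [Set.mem_ofPred_eq] at *
    have : mon R (s + t) - 1 = mon R s * (mon R t - 1) + (mon R s - 1) := by
      rw [mon_add]; ring
    rw [this]
    exact I.add_mem (I.mul_mem_left _ ht) hs
  neg_mem' {t} ht := by
    simp only [Set.mem_ofPred_eq] at *
    have : mon R (-t) - 1 = - mon R (-t) * (mon R t - 1) := by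
      linear_combination mon_neg_mul (R := R) t
    rw [this]
    exact I.mul_mem_left _ ht

lemma mem_perI {R : Type*} [CommRing R] {I : Ideal (LP R)} {t : ℤ × ℤ} :
    t ∈ perI I ↔ mon R t - 1 ∈ I := Iff.rfl

/-- the substitution `X ↦ X^n` -/
noncomputable def expd (n : ℕ) : LP ℤ →+* LP ℤ :=
  AddMonoidAlgebra.mapDomainRingHom ℤ (nsmulAddMonoidHom n : ℤ × ℤ →+ ℤ × ℤ)

lemma expd_single (n : ℕ) (t : ℤ × ℤ) (a : ℤ) :
    expd n (AddMonoidAlgebra.single t a) = AddMonoidAlgebra.single (n • t) a := by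
  simp [expd]

lemma expd_eq (n : ℕ) (g : LP ℤ) :
    expd n g = ∑ m ∈ g.coeff.support, AddMonoidAlgebra.single (n • m) (g.coeff m) := by
  conv_lhs => rw [← AddMonoidAlgebra.sum_coeff_single g, Finsupp.sum]
  simp [map_sum, expd_single]

lemma expd_expd (m n : ℕ) (g : LP ℤ) : expd m (expd n g) = expd (m * n) g := by
  simp [expd_eq n, expd_eq (m * n), map_sum, expd_single, mul_smul]

lemma frob (q : ℕ) (hq : q.Prime) (g : LP ℤ) : ∃ h : LP ℤ, g ^ q = expd q g + (q : LP ℤ) * h := by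
  have : Fact q.Prime := ⟨hq⟩
  induction g using AddMonoidAlgebra.induction_linear with
  | zero => exact ⟨0, by simp [hq.ne_zero]⟩
  | add f g hf hg =>
    obtain ⟨h₁, h₁'⟩ := hf
    obtain ⟨h₂, h₂'⟩ := hg
    obtain ⟨r, hr⟩ := exists_add_pow_prime_eq hq f g
    refine ⟨h₁ + h₂ + f * g * r, ?_⟩
    rw [hr, h₁', h₂', map_add]
    ring
  | single t a =>
    have : (q : ℤ) ∣ a ^ q - a := by
      rw [← ZMod.intCast_zmod_eq_zero_iff_dvd]
      push_cast
      rw [ZMod.pow_card, sub_self]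
    obtain ⟨b, hb⟩ := this
    refine ⟨AddMonoidAlgebra.single (q • t) b, ?_⟩
    rw [expd_single, AddMonoidAlgebra.single_pow]
    have : (q : LP ℤ) = AddMonoidAlgebra.single 0 (q : ℤ) := by
      simp [AddMonoidAlgebra.natCast_def]
    rw [this, AddMonoidAlgebra.single_mul_single, zero_add, ← AddMonoidAlgebra.single_add, ← hb]
    congr 1
    ring

lemma expd_ann (C : ℤ × ℤ → ℤ) (B : ℤ) (hB : ∀ n, |C n| ≤ B) (g : LP ℤ) (hg : g ∈ annI C) :
    ∃ M : ℕ, ∀ n : ℕ, n ≠ 0 → (∀ q : ℕ, q.Prime → q ∣ n → M < q) → expd n g ∈ annI C := by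
  refine ⟨(∑ m ∈ g.coeff.support, |g.coeff m| * B).toNat, ?_⟩
  intro n
  induction n using induction_on_primes with
  | zero => simp
  | one =>
    intro _ _
    have : expd 1 g = g := by
      rw [expd_eq]
      simpa [Finsupp.sum] using AddMonoidAlgebra.sum_coeff_single g
    rwa [this]
  | prime_mul q n hq ih =>
    intro hn h
    have hn0 : n ≠ 0 := by rintro rfl; simp at hn
    have h1 := ih hn0 (fun q' h1 h2 => h q' h1 (h2.mul_left q))
    have hMq := h q hq (dvd_mul_right _ _)
    obtain ⟨r, hr⟩ := frob q hq (expd n g)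
    rw [expd_expd] at hr
    have h2 : (expd n g) ^ q ∈ annI C := Ideal.pow_mem_of_mem _ h1 _ hq.pos
    rw [hr, mem_annI] at h2
    rw [mem_annI]
    funext t
    have h3 := congrFun h2 t
    have h4 : act ℤ (expd (q * n) g) C t = - (q : ℤ) * act ℤ r C t := by
      simp only [map_add, map_mul, map_natCast, LinearMap.add_apply, Pi.add_apply,
        Pi.zero_apply, Module.End.mul_apply, Module.End.natCast_apply, Pi.mul_apply, Pi.natCast_apply,
        nsmul_eq_mul] at h3
      linarith
    have h5 : |act ℤ (expd (q * n) g) C t| < q := by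
      have : |act ℤ (expd (q * n) g) C t| ≤ ∑ m ∈ g.coeff.support, |g.coeff m| * B := by
        rw [expd_eq, map_sum, LinearMap.sum_apply, Finset.sum_apply]
        refine (Finset.abs_sum_le_sum_abs _ _).trans (Finset.sum_le_sum fun m _ => ?_)
        rw [act_single, abs_mul]
        exact mul_le_mul_of_nonneg_left (hB _) (abs_nonneg _)
      omega
    exact Int.eq_zero_of_abs_lt_dvd ⟨- act ℤ r C t, by rw [h4]; ring⟩ h5

lemma prod_ann (C : ℤ × ℤ → ℤ) (B : ℤ) (hB : ∀ n, |C n| ≤ B) (g : LP ℤ) (hg : g ∈ annI C)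
    (hg0 : g ≠ 0) :
    ∃ (k : ℕ) (w : Fin k → ℤ × ℤ), Function.Injective w ∧
      ∏ i, ∏ j ∈ Finset.Ioi i, (mon ℤ (w j) - mon ℤ (w i)) ∈ annI C := by
  obtain ⟨M, hM⟩ := expd_ann C B hB g hg
  set r := M.factorial with hr
  have hr0 : r ≠ 0 := Nat.factorial_ne_zero _
  have h1 : ∀ i : ℕ, expd (1 + r * i) g ∈ annI C := by
    intro i
    refine hM _ (by omega) fun q hq hd => ?_
    by_contra hlt
    have h2 : q ∣ r := hq.dvd_factorial.2 (by omega)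
    have h3 : q ∣ 1 := (Nat.dvd_add_left (h2.mul_right i)).1 hd
    exact hq.one_lt.ne' (Nat.dvd_one.1 h3)
  let e := g.coeff.support.equivFin.symm
  set k := g.coeff.support.card with hk
  have hkpos : 0 < k := by
    rw [hk, Finset.card_pos]
    simpa [Finsupp.support_nonempty_iff] using hg0
  let w : Fin k → ℤ × ℤ := fun i => r • (e i : ℤ × ℤ)
  refine ⟨k, w, ?_, ?_⟩
  · intro i j hij
    have hij' : (e i : ℤ × ℤ) = e j := by
      have := congrArg Prod.fst hij
      have h' := congrArg Prod.snd hij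
      simp [w, hr0] at this h'
      exact Prod.ext this h'
    exact e.injective (Subtype.ext hij')
  · rw [← Matrix.det_vandermonde (fun i => mon ℤ (w i)), ← Matrix.det_transpose]
    set V := (Matrix.vandermonde (fun i => mon ℤ (w i))).transpose with hV
    let y : Fin k → LP ℤ := fun j => AddMonoidAlgebra.single (e j : ℤ × ℤ) (g.coeff (e j))
    have h2 : ∀ i : Fin k, V.mulVec y i = expd (1 + r * i) g := by
      intro i
      rw [expd_eq, ← Finset.sum_coe_sort, ← e.sum_comp]
      simp only [Matrix.mulVec, dotProduct]
      refine Finset.sum_congr rfl fun j _ => ?_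
      simp only [hV, Matrix.transpose_apply, Matrix.vandermonde_apply, y, w, ← mon_nsmul]
      rw [mon, AddMonoidAlgebra.single_mul_single, one_mul]
      congr 1
      rw [add_smul, one_smul, mul_comm, mul_smul, add_comm]
    have h3 : V.adjugate.mulVec (V.mulVec y) = V.det • y := by
      rw [Matrix.mulVec_mulVec, Matrix.adjugate_mul, Matrix.smul_mulVec, Matrix.one_mulVec]
    let j : Fin k := ⟨0, hkpos⟩
    have h4 : V.det * y j ∈ annI C := by
      have := congrFun h3 j
      rw [Pi.smul_apply, smul_eq_mul] at this
      rw [← this, Matrix.mulVec, dotProduct]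
      refine Ideal.sum_mem _ fun i _ => Ideal.mul_mem_left _ _ ?_
      rw [h2]
      exact h1 _
    have ha : g.coeff (e j) ≠ 0 := Finsupp.mem_support_iff.1 (e j).2
    have h5 : mon ℤ (-(e j : ℤ × ℤ)) * (V.det * y j) = (g.coeff (e j)) • V.det := by
      have : mon ℤ (-(e j : ℤ × ℤ)) * y j = (g.coeff (e j)) • (1 : LP ℤ) := by
        simp [mon, y, AddMonoidAlgebra.single_mul_single, AddMonoidAlgebra.one_def]
      rw [mul_left_comm, this, mul_smul_comm, mul_one]
    have h6 := (annI C).mul_mem_left (mon ℤ (-(e j : ℤ × ℤ))) h4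
    rw [h5, mem_annI, map_smul, LinearMap.smul_apply] at h6
    exact (smul_eq_zero.1 h6).resolve_left ha

lemma exists_int_ann {R : Type*} [Finite R] (c : ℤ × ℤ → R) (φ : R → ℤ) (hlc : LowComplexity c) :
    ∃ g : LP ℤ, g ≠ 0 ∧ g ∈ annI (fun n => φ (c n)) := by
  obtain ⟨D, hD, hcard⟩ := hlc
  have : Fintype (Patterns c D) := Fintype.ofFinite _
  let L : (Option D → ℤ) →ₗ[ℤ] (Patterns c D → ℤ) :=
    { toFun := fun a P => a none + ∑ d : D, a (some d) * φ (P.1 d)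
      map_add' := by
        intro a b
        funext P
        simp [add_mul, Finset.sum_add_distrib]
        ring
      map_smul' := by
        intro m a
        funext P
        simp [mul_add, Finset.mul_sum, mul_assoc] }
  have hL : ¬ Function.Injective L := by
    intro h
    have := card_le_of_injective ℤ L h
    rw [← Nat.card_coe_set_eq, Nat.card_eq_fintype_card] at hcard
    simp only [Fintype.card_option, Fintype.card_coe] at this
    omega
  rw [← LinearMap.ker_eq_bot, Submodule.eq_bot_iff] at hL
  push Not at hL
  obtain ⟨a, ha, ha0⟩ := hL
  have key : ∀ t : ℤ × ℤ, ∑ d : D, a (some d) * φ (c (t + d.1)) = - a none := by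
    intro t
    have := congrFun (LinearMap.mem_ker.1 ha) ⟨_, t, rfl⟩
    simp [L] at this
    simp
    linarith
  let g : LP ℤ := ∑ d : D, AddMonoidAlgebra.single (-d.1) (a (some d))
  have hgc : ∀ d : D, g.coeff (-d.1) = a (some d) := by
    intro d
    simp [g, Finsupp.single_apply]
  have hg0 : g ≠ 0 := by
    intro h
    have h1 : ∀ d : D, a (some d) = 0 := fun d => by rw [← hgc d, h]; simp
    have h2 := key 0
    simp only [h1, zero_mul, Finset.sum_const_zero] at h2
    apply ha0
    funext o
    cases o with
    | none => simp; linarith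
    | some d => exact h1 d
  have hgact : ∀ t, act ℤ g (fun n => φ (c n)) t = - a none := by
    intro t
    rw [← key t, map_sum, LinearMap.sum_apply, Finset.sum_apply]
    simp [act_single]
  refine ⟨(mon ℤ (1, 0) - 1) * g, mul_ne_zero ?_ hg0, ?_⟩
  · rw [sub_ne_zero, ← mon_zero]
    intro h
    have := AddMonoidAlgebra.single_left_injective one_ne_zero h
    simp at this
  · rw [mem_annI, map_mul, Module.End.mul_apply]
    funext t
    rw [map_sub, map_one, LinearMap.sub_apply, Pi.sub_apply, act_mon, Module.End.one_apply, hgact,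
      hgact]
    simp

lemma act_map (p : ℕ) (h : LP ℤ) (C : ℤ × ℤ → ℤ) (n : ℤ × ℤ) :
    act (ZMod p) (AddMonoidAlgebra.mapRingHom (ℤ × ℤ) (Int.castRingHom (ZMod p)) h)
      (fun m => (C m : ZMod p)) n = ((act ℤ h C n : ℤ) : ZMod p) := by
  induction h using AddMonoidAlgebra.induction_linear with
  | zero => simp
  | add f g hf hg => simp [hf, hg]
  | single t a => simp [act_single]

lemma exists_prod_ann (p : ℕ) [Fact p.Prime] (c : ℤ × ℤ → ZMod p) (hlc : LowComplexity c) :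
    ∃ (k : ℕ) (w : Fin k → ℤ × ℤ), Function.Injective w ∧
      ∏ i, ∏ j ∈ Finset.Ioi i, (mon (ZMod p) (w j) - mon (ZMod p) (w i)) ∈ annI c := by
  obtain ⟨g, hg0, hg⟩ := exists_int_ann c (fun x => (x.val : ℤ)) hlc
  obtain ⟨k, w, hw, hmem⟩ := prod_ann _ p (by
    intro n
    have := ZMod.val_lt (c n)
    simp only [Nat.abs_cast]
    exact_mod_cast this.le) g hg hg0
  refine ⟨k, w, hw, ?_⟩
  rw [mem_annI] at *
  funext n
  have h := act_map p _ (fun n => ((c n).val : ℤ)) n |>.trans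
    (congrArg (Int.cast : ℤ → ZMod p) (congrFun hmem n))
  simpa [mon] using h

section Core

open Polynomial

/-- the ideal generated by `g` and `f` contains `X^(K u) - 1` for some nonzero `K` -/
def HasPer {p : ℕ} (u : ℤ × ℤ) (f g : LP (ZMod p)) : Prop :=
  ∃ K : ℤ, K ≠ 0 ∧ K • u ∈ perI (Ideal.span {g, f})

lemma HasPer.of_dvd_one {p : ℕ} (u : ℤ × ℤ) (f g : LP (ZMod p)) (hg : IsUnit g) :
    HasPer u f g := by
  refine ⟨1, one_ne_zero, ?_⟩
  rw [mem_perI, (Ideal.eq_top_of_isUnit_mem _ (Ideal.subset_span (by simp)) hg :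
    Ideal.span {g, f} = ⊤)]
  trivial

lemma HasPer.mul {p : ℕ} [Fact p.Prime] {u : ℤ × ℤ} {f g g' : LP (ZMod p)}
    (h : HasPer u f g) (h' : HasPer u f g') : HasPer u f (g * g') := by
  obtain ⟨K, hK, hKm⟩ := h
  obtain ⟨L, hL, hLm⟩ := h'
  have : CharP (LP (ZMod p)) p :=
    charP_of_injective_algebraMap (algebraMap (ZMod p) (LP (ZMod p))).injective p
  have hp : p.Prime := Fact.out
  have h1 : (K * L) • u ∈ perI (Ideal.span {g, f}) := by
    rw [mul_comm, mul_smul]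
    exact zsmul_mem hKm L
  have h2 : (K * L) • u ∈ perI (Ideal.span {g', f}) := by
    rw [mul_smul]
    exact zsmul_mem hLm K
  refine ⟨p * (K * L), mul_ne_zero (by exact_mod_cast hp.ne_zero) (mul_ne_zero hK hL), ?_⟩
  rw [mem_perI] at *
  have h3 : mon (ZMod p) (((p : ℤ) * (K * L)) • u) - 1
      = (mon (ZMod p) ((K * L) • u) - 1) ^ p := by
    rw [sub_pow_char, one_pow, ← mon_nsmul, mul_smul, natCast_zsmul]
  rw [h3]
  have h4 : (mon (ZMod p) ((K * L) • u) - 1) ^ 2 ∈ Ideal.span {g * g', f} := by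
    rw [Ideal.mem_span_pair] at *
    obtain ⟨a, b, hab⟩ := h1
    obtain ⟨a', b', hab'⟩ := h2
    refine ⟨a * a', a * g * b' + b * a' * g' + b * f * b', ?_⟩
    rw [sq]
    nth_rewrite 1 [← hab]
    rw [← hab']
    ring
  obtain ⟨z, hz⟩ := pow_dvd_pow (mon (ZMod p) ((K * L) • u) - 1) hp.two_le
  rw [hz]
  exact Ideal.mul_mem_right _ _ h4

lemma decomp {v w : ℤ × ℤ} (hvw : v.1 * w.2 - v.2 * w.1 = 1) (t : ℤ × ℤ) :
    t = (t.1 * w.2 - t.2 * w.1) • v + (v.1 * t.2 - v.2 * t.1) • w := by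
  ext
  · simp
    linear_combination (-t.1) * hvw
  · simp
    linear_combination (-t.2) * hvw

lemma mk_mon_eq_one {R : Type*} [CommRing R] {I : Ideal (LP R)} {t : ℤ × ℤ} (h : t ∈ perI I) :
    Ideal.Quotient.mk I (mon R t) = 1 := by
  rw [← map_one (Ideal.Quotient.mk I), Ideal.Quotient.eq]
  exact h

lemma core {p : ℕ} [Fact p.Prime] {v w : ℤ × ℤ} (hvw : v.1 * w.2 - v.2 * w.1 = 1)
    (f : LP (ZMod p)) (π : (ZMod p)[X]) (hπ : Irreducible π) (d : ℕ) (hd : d ≠ 0)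
    (hper : d • v ∈ perI (Ideal.span {aeval (mon (ZMod p) v) π}))
    (hndvd : ¬ aeval (mon (ZMod p) v) π ∣ f) :
    ∃ N : ℕ, N ≠ 0 ∧ N • w ∈ perI (Ideal.span {aeval (mon (ZMod p) v) π, f}) := by
  have : Fact (Irreducible π) := ⟨hπ⟩
  set I := Ideal.span {aeval (mon (ZMod p) v) π} with hI
  let mk := Ideal.Quotient.mk I
  let ι : AdjoinRoot π →+* (LP (ZMod p) ⧸ I) :=
    AdjoinRoot.lift (mk.comp (algebraMap (ZMod p) (LP (ZMod p)))) (mk (mon (ZMod p) v)) (by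
      rw [← hom_eval₂, ← aeval_def]
      exact Ideal.Quotient.eq_zero_iff_mem.2 (Ideal.subset_span rfl))
  let ψ : (AdjoinRoot π)[X] →+* (LP (ZMod p) ⧸ I) := eval₂RingHom ι (mk (mon (ZMod p) w))
  have hψX : ψ X = mk (mon (ZMod p) w) := by simp [ψ]
  have hψC : ∀ x, ψ (C x) = ι x := fun x => by simp [ψ]
  have hιr : ι (AdjoinRoot.root π) = mk (mon (ZMod p) v) := AdjoinRoot.lift_root _
  have hιo : ∀ a, ι (AdjoinRoot.of π a) = mk (algebraMap (ZMod p) (LP (ZMod p)) a) :=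
    fun a => AdjoinRoot.lift_of _
  have hunit : ∀ t, mk (mon (ZMod p) (-t)) * mk (mon (ZMod p) t) = 1 := by
    intro t
    rw [← map_mul, mon_neg_mul, map_one]
  have hsurj : ∀ h : LP (ZMod p), ∃ (N : ℕ) (P : (AdjoinRoot π)[X]),
      mk (mon (ZMod p) (N • w)) * mk h = ψ P := by
    intro h
    induction h using AddMonoidAlgebra.induction_linear with
    | zero => exact ⟨0, 0, by simp⟩
    | add h₁ h₂ ih₁ ih₂ =>
      obtain ⟨N₁, P₁, e₁⟩ := ih₁
      obtain ⟨N₂, P₂, e₂⟩ := ih₂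
      refine ⟨N₁ + N₂, X ^ N₂ * P₁ + X ^ N₁ * P₂, ?_⟩
      simp only [map_add, map_mul, map_pow, hψX, ← e₁, ← e₂, add_smul, mon_add, mon_nsmul]
      ring
    | single t a =>
      set α := t.1 * w.2 - t.2 * w.1 with hα
      set β := v.1 * t.2 - v.2 * t.1 with hβ
      have ht : t = α • v + β • w := decomp hvw t
      obtain ⟨m, hm⟩ : ∃ m : ℕ, (m : ℤ) = α % d :=
        ⟨(α % d).toNat, Int.toNat_of_nonneg (Int.emod_nonneg _ (by exact_mod_cast hd))⟩
      obtain ⟨j, hj⟩ : ∃ j : ℕ, (j : ℤ) = β.natAbs + β := ⟨(β.natAbs + β).toNat, by omega⟩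
      refine ⟨β.natAbs, C (AdjoinRoot.of π a * AdjoinRoot.root π ^ m) * X ^ j, ?_⟩
      have e1 : (AddMonoidAlgebra.single t a : LP (ZMod p))
          = algebraMap (ZMod p) (LP (ZMod p)) a * mon (ZMod p) t := by
        simp [mon, AddMonoidAlgebra.single_mul_single]
      have e2 : β.natAbs • w + t = m • v + (α / d) • (d • v) + j • w := by
        have hα' : α = m + d * (α / d) := by
          rw [hm]
          exact (Int.emod_add_mul_ediv α d).symm
        rw [← natCast_zsmul w j, hj]
        conv_lhs => rw [ht, hα']
        simp only [add_smul, mul_smul, natCast_zsmul]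
        rw [smul_comm (α / (d : ℤ)) d v]
        abel
      have e3 : mk (mon (ZMod p) ((α / (d : ℤ)) • (d • v))) = 1 :=
        mk_mon_eq_one (zsmul_mem hper _)
      rw [e1, map_mul, mul_left_comm, ← map_mul mk (mon (ZMod p) _), ← mon_add, e2, mon_add,
        mon_add, map_mul, map_mul, e3, mon_nsmul, mon_nsmul]
      rw [map_mul ψ, hψC, map_mul ι, map_pow ι, hιr, hιo, map_pow ψ, hψX, map_pow, map_pow,
        mul_one, mul_assoc]
  obtain ⟨N, P, hP⟩ := hsurj f
  have hP0 : P ≠ 0 := by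
    rintro rfl
    apply hndvd
    rw [← Ideal.mem_span_singleton, ← hI, ← Ideal.Quotient.eq_zero_iff_mem]
    have := congrArg (fun z => mk (mon (ZMod p) (-(N • w))) * z) hP
    simpa [← mul_assoc, hunit] using this
  have : Finite (AdjoinRoot π) := by
    have := (AdjoinRoot.powerBasis hπ.ne_zero).finite
    exact Module.finite_of_finite (ZMod p)
  have : Finite (AdjoinRoot P) := by
    have := (AdjoinRoot.powerBasis hP0).finite
    exact Module.finite_of_finite (AdjoinRoot π)
  obtain ⟨i, j, hij, hroot⟩ : ∃ i j : ℕ, i < j ∧ AdjoinRoot.root P ^ i = AdjoinRoot.root P ^ j := by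
    obtain ⟨i, j, hne, h⟩ :=
      Finite.exists_ne_map_eq_of_infinite (fun n : ℕ => AdjoinRoot.root P ^ n)
    rcases lt_or_gt_of_ne hne with h' | h'
    · exact ⟨i, j, h', h⟩
    · exact ⟨j, i, h', h.symm⟩
  have hdvd : P ∣ X ^ j - X ^ i := by
    rw [← AdjoinRoot.mk_eq_zero]
    simp [hroot]
  obtain ⟨q, hq⟩ := hdvd
  obtain ⟨q', hq'⟩ := Ideal.Quotient.mk_surjective (ψ q)
  refine ⟨j - i, by omega, ?_⟩
  have h1 : mk (mon (ZMod p) (i • w) * (mon (ZMod p) ((j - i) • w) - 1))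
      = mk (mon (ZMod p) (N • w) * f * q') := by
    have := congrArg ψ hq
    rw [map_mul ψ, ← hP, ← hq', map_sub, map_pow, map_pow, hψX] at this
    rw [map_mul, map_mul mk (_ * f), map_mul mk _ f, map_sub, map_one, ← this, mon_nsmul, mon_nsmul,
      map_pow, map_pow, mul_sub, ← pow_add, mul_one]
    congr 2
    omega
  rw [Ideal.Quotient.eq] at h1
  have hle : I ≤ Ideal.span {aeval (mon (ZMod p) v) π, f} :=
    Ideal.span_mono (by simp)
  have h2 := (Ideal.span {aeval (mon (ZMod p) v) π, f}).add_mem (hle h1)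
    (Ideal.mul_mem_left _ (mon (ZMod p) (N • w) * q') (Ideal.subset_span (by simp : f ∈ _)))
  rw [mem_perI]
  have h3 := Ideal.mul_mem_left _ (mon (ZMod p) (-(i • w))) h2
  convert h3 using 1
  linear_combination (1 - mon (ZMod p) ((j - i) • w)) * mon_neg_mul (R := ZMod p) (i • w)

lemma aeval_mon_eq {p : ℕ} (v : ℤ × ℤ) (P : (ZMod p)[X]) :
    aeval (mon (ZMod p) v) P
      = ∑ i ∈ P.support, AddMonoidAlgebra.single (i • v) (P.coeff i) := by
  rw [aeval_eq_sum_range' (Nat.lt_succ_self _), eq_comm]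
  rw [Finset.sum_subset (s₂ := Finset.range (P.natDegree + 1))]
  · refine Finset.sum_congr rfl fun i _ => ?_
    rw [← mon_nsmul, mon, AddMonoidAlgebra.smul_single, smul_eq_mul, mul_one]
  · exact supp_subset_range_natDegree_succ
  · intro i _ hi
    simp [notMem_support_iff.1 hi]

lemma nsmul_inj_of_ne {v : ℤ × ℤ} (hv : v ≠ 0) {i j : ℕ} (h : i • v = j • v) : i = j := by
  have h1 := congrArg Prod.fst h
  have h2 := congrArg Prod.snd h
  simp at h1 h2
  rcases h1 with h1 | h1
  · exact h1
  · rcases h2 with h2 | h2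
    · exact h2
    · exact absurd (Prod.ext h1 h2) hv

lemma coeff_aeval_mon {p : ℕ} {v : ℤ × ℤ} (hv : v ≠ 0) (P : (ZMod p)[X]) (i : ℕ) :
    (aeval (mon (ZMod p) v) P).coeff (i • v) = P.coeff i := by
  rw [aeval_mon_eq, AddMonoidAlgebra.coeff_sum, Finsupp.finsetSum_apply,
    Finset.sum_eq_single i]
  · simp
  · intro j _ hj
    simp only [AddMonoidAlgebra.coeff_single]
    exact Finsupp.single_eq_of_ne (fun h => hj (nsmul_inj_of_ne hv h).symm)
  · intro hi
    simp [notMem_support_iff.1 hi]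

lemma isLinePoly_aeval {p : ℕ} {v : ℤ × ℤ} (hv : v ≠ 0) (P : (ZMod p)[X])
    (h0 : P.coeff 0 ≠ 0) (hdeg : P.natDegree ≠ 0) :
    0 ∈ (aeval (mon (ZMod p) v) P).coeff.support ∧
    P.natDegree • v ∈ (aeval (mon (ZMod p) v) P).coeff.support ∧
    IsLinePoly v (aeval (mon (ZMod p) v) P) := by
  have h1 : 0 ∈ (aeval (mon (ZMod p) v) P).coeff.support := by
    rw [Finsupp.mem_support_iff, ← zero_smul ℕ v, coeff_aeval_mon hv]
    exact h0
  have h2 : P.natDegree • v ∈ (aeval (mon (ZMod p) v) P).coeff.support := by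
    rw [Finsupp.mem_support_iff, coeff_aeval_mon hv, coeff_natDegree, leadingCoeff_ne_zero]
    rintro rfl
    simp at hdeg
  refine ⟨h1, h2, Finset.one_lt_card.2 ⟨0, h1, _, h2, ?_⟩, 0, ?_⟩
  · intro h
    rw [← zero_smul ℕ v] at h
    exact hdeg (nsmul_inj_of_ne hv h).symm
  · intro m hm
    rw [Finsupp.mem_support_iff, aeval_mon_eq, AddMonoidAlgebra.coeff_sum,
      Finsupp.finsetSum_apply] at hm
    obtain ⟨i, _, hi⟩ := Finset.exists_ne_zero_of_sum_ne_zero hm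
    have : m = i • v := by
      by_contra hne
      exact hi (by simpa using Finsupp.single_eq_of_ne hne)
    refine ⟨i, ?_, ?_⟩ <;> simp [this]

lemma hasPer_mon {p : ℕ} [Fact p.Prime] {u : ℤ × ℤ} {f : LP (ZMod p)}
    (hline : ∀ g : LP (ZMod p), g ∣ f →
      (∃ v : ℤ × ℤ, v ≠ 0 ∧ IsLinePoly v g) → IsLinePoly u g)
    {t : ℤ × ℤ} (ht : t ≠ 0) : HasPer u f (mon (ZMod p) t - 1) := by
  have hpos : 0 < Int.gcd t.1 t.2 := by
    rw [Int.gcd_pos_iff]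
    by_contra h
    push Not at h
    exact ht (Prod.ext h.1 h.2)
  obtain ⟨d, a, b, hd, hab, ha, hb⟩ := Int.exists_gcd_one' hpos
  obtain ⟨x, y, hxy⟩ := Int.isCoprime_iff_gcd_eq_one.2 hab
  let v : ℤ × ℤ := (a, b)
  let w : ℤ × ℤ := (-y, x)
  have hvw : v.1 * w.2 - v.2 * w.1 = 1 := by simp only [v, w]; linarith
  have htv : t = d • v := by
    ext
    · simp [v, ha, mul_comm]
    · simp [v, hb, mul_comm]
  have hv : v ≠ 0 := by
    intro h
    rw [h] at hvw
    simp at hvw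
  have key : ∀ P : (ZMod p)[X], P ∣ X ^ d - 1 → HasPer u f (aeval (mon (ZMod p) v) P) := by
    intro P
    induction P using UniqueFactorizationMonoid.induction_on_prime with
    | h₁ =>
      intro h
      rw [zero_dvd_iff] at h
      exact absurd h (X_pow_sub_C_ne_zero hd 1)
    | h₂ P hP =>
      intro _
      exact HasPer.of_dvd_one _ _ _ (hP.map _)
    | h₃ P π hP0 hπ ih =>
      intro h
      rw [map_mul]
      refine HasPer.mul ?_ (ih ((dvd_mul_left _ _).trans h))
      have hπd : π ∣ X ^ d - 1 := (dvd_mul_right _ _).trans h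
      have hper : d • v ∈ perI (Ideal.span {aeval (mon (ZMod p) v) π}) := by
        rw [mem_perI, Ideal.mem_span_singleton]
        have := map_dvd (aeval (mon (ZMod p) v)) hπd
        rw [mon_nsmul]
        simpa using this
      have hle : ∀ s, s ∈ perI (Ideal.span {aeval (mon (ZMod p) v) π}) →
          s ∈ perI (Ideal.span {aeval (mon (ZMod p) v) π, f}) := by
        intro s hs
        exact Ideal.span_mono (by simp) hs
      have hu := decomp hvw u
      by_cases hdvd : aeval (mon (ZMod p) v) π ∣ f
      · have h0 : π.coeff 0 ≠ 0 := by
          obtain ⟨z, hz⟩ := hπd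
          have := congrArg (fun r => r.coeff 0) hz
          simp only [mul_coeff_zero] at this
          intro h0
          rw [h0] at this
          simp [coeff_X_pow, hd.ne] at this
        have hdeg : π.natDegree ≠ 0 := hπ.irreducible.natDegree_pos.ne'
        obtain ⟨m0, mn, hl⟩ := isLinePoly_aeval hv π h0 hdeg
        obtain ⟨_, n, hn⟩ := hline _ hdvd ⟨v, hv, hl⟩
        obtain ⟨r, hr1, hr2⟩ := hn _ m0
        obtain ⟨r', hr1', hr2'⟩ := hn _ mn
        have hβ : v.1 * u.2 - v.2 * u.1 = 0 := by
          have : (π.natDegree : ℚ) * ((v.1 : ℚ) * u.2 - v.2 * u.1) = 0 := by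
            simp at hr1 hr2 hr1' hr2'
            linear_combination (u.2 : ℚ) * (hr1' - hr1) - u.1 * (hr2' - hr2)
          have h' := (mul_eq_zero.1 this).resolve_left (by exact_mod_cast hdeg)
          exact_mod_cast h'
        rw [hβ, zero_smul, add_zero] at hu
        refine ⟨d, by exact_mod_cast hd.ne', hle _ ?_⟩
        rw [hu, smul_comm (d : ℤ), natCast_zsmul v d]
        exact zsmul_mem hper _
      · obtain ⟨N, hN, hNw⟩ := core hvw f π hπ.irreducible d hd.ne' hper hdvd
        refine ⟨(d * N : ℕ), by exact_mod_cast mul_ne_zero hd.ne' hN, ?_⟩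
        rw [hu, smul_add]
        refine add_mem ?_ ?_
        · have e : ∀ α : ℤ, ((d * N : ℕ) : ℤ) • α • v = (α * N) • (d • v) := by
            intro α
            ext <;> simp <;> ring
          rw [e]
          exact zsmul_mem (hle _ hper) _
        · have e : ∀ β : ℤ, ((d * N : ℕ) : ℤ) • β • w = (β * d) • (N • w) := by
            intro β
            ext <;> simp <;> ring
          rw [e]
          exact zsmul_mem hNw _
  have := key _ dvd_rfl
  rw [htv, mon_nsmul]
  simpa using this

lemma HasPer.prod {p : ℕ} [Fact p.Prime] {ι : Type*} {u : ℤ × ℤ} {f : LP (ZMod p)}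
    (s : Finset ι) (g : ι → LP (ZMod p)) (h : ∀ i ∈ s, HasPer u f (g i)) :
    HasPer u f (∏ i ∈ s, g i) :=
  Finset.prod_induction g (HasPer u f) (fun _ _ => HasPer.mul)
    (HasPer.of_dvd_one _ _ _ isUnit_one) h

end Core

/-- an algebraic subshift whose defining polynomial has all line polynomial
factors in the same direction has the generalized Nivat property. -/
theorem generalized_nivat_one_direction (p : ℕ) [Fact p.Prime] (f : LP (ZMod p))
    (hf : f ≠ 0)
    (hline : ∃ u : ℤ × ℤ, u ≠ 0 ∧ ∀ g : LP (ZMod p), g ∣ f →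
      (∃ v : ℤ × ℤ, v ≠ 0 ∧ IsLinePoly v g) → IsLinePoly u g)
    (c : ℤ × ℤ → ZMod p) (hc : Annihilates f c) (hlc : LowComplexity c) :
    Periodic c := by
  obtain ⟨u, hu, hline⟩ := hline
  obtain ⟨k, w, hw, hmem⟩ := exists_prod_ann p c hlc
  have h1 : HasPer u f
      (∏ i, ∏ j ∈ Finset.Ioi i, (mon (ZMod p) (w j) - mon (ZMod p) (w i))) := by
    refine HasPer.prod _ _ fun i _ => HasPer.prod _ _ fun j hj => ?_
    have hij : w j - w i ≠ 0 := sub_ne_zero.2 fun h => (Finset.mem_Ioi.1 hj).ne' (hw h)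
    have e : mon (ZMod p) (w j) - mon (ZMod p) (w i)
        = mon (ZMod p) (w i) * (mon (ZMod p) (w j - w i) - 1) := by
      rw [mul_sub, ← mon_add, add_sub_cancel, mul_one]
    rw [e]
    refine HasPer.mul (HasPer.of_dvd_one _ _ _ ?_) (hasPer_mon hline hij)
    exact IsUnit.of_mul_eq_one_right _ (mon_neg_mul (w i))
  obtain ⟨K, hK, hper⟩ := h1
  rw [mem_perI] at hper
  have hle : Ideal.span {∏ i, ∏ j ∈ Finset.Ioi i, (mon (ZMod p) (w j) - mon (ZMod p) (w i)), f}
      ≤ annI c := by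
    rw [Ideal.span_le]
    rintro x (rfl | rfl)
    · exact hmem
    · exact (annihilates_iff _ _).1 hc
  have h2 := hle hper
  rw [mem_annI] at h2
  refine ⟨K • u, smul_ne_zero hK hu, fun n => ?_⟩
  have h3 := congrFun h2 (n + K • u)
  rw [map_sub, map_one, LinearMap.sub_apply, Pi.sub_apply, act_mon, Module.End.one_apply,
    add_sub_cancel_right, Pi.zero_apply, sub_eq_zero] at h3
  exact h3.symm
end

section
/- Let p be a prime and let g be a Laurent polynomial over F_p in the single variable X whose support has at least two elements. Then the two-variable Laurent polynomial Y − g(X) over F_p has no line polynomial factors. -/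
theorem line_partner {p : ℕ} [Fact p.Prime] (h q : LP (ZMod p)) (u : ℤ × ℤ)
    (hl : IsLinePoly u h) (m : ℤ × ℤ) (hm : m ∈ (h * q).coeff.support) :
    ∃ m' ∈ (h * q).coeff.support, m' ≠ m ∧
      m'.1 * u.2 - m'.2 * u.1 = m.1 * u.2 - m.2 * u.1 := by
  classical
  obtain ⟨hc, n, hn⟩ := hl
  have hlev : ∀ a ∈ h.coeff.support, a.1 * u.2 - a.2 * u.1 = n.1 * u.2 - n.2 * u.1 := by
    intro a ha
    obtain ⟨r, h1, h2⟩ := hn a ha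
    have : (a.1 : ℚ) * u.2 - a.2 * u.1 = n.1 * u.2 - n.2 * u.1 := by
      rw [h1, h2]; ring
    exact_mod_cast this
  have hm2 := AddMonoidAlgebra.support_coeff_mul_subset h q hm
  obtain ⟨a0, ha0, b0, hb0, rfl⟩ := Finset.mem_add.1 hm2
  set B := q.coeff.support.filter
    (fun b => b.1 * u.2 - b.2 * u.1 = b0.1 * u.2 - b0.2 * u.1) with hB
  have hb0B : b0 ∈ B := Finset.mem_filter.2 ⟨hb0, rfl⟩
  have hpos : 0 < B.card := Finset.card_pos.2 ⟨b0, hb0B⟩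
  have hu : ∀ a b, a ∈ h.coeff.support → b ∈ B → UniqueAdd h.coeff.support B a b →
      a + b ∈ (h * q).coeff.support ∧
      (a + b).1 * u.2 - (a + b).2 * u.1 = (a0 + b0).1 * u.2 - (a0 + b0).2 * u.1 := by
    intro a b ha hb hab
    have hb' := Finset.mem_filter.1 hb
    have hua : UniqueAdd h.coeff.support q.coeff.support a b := by
      intro a' b' ha' hb'' he
      refine hab ha' (Finset.mem_filter.2 ⟨hb'', ?_⟩) he
      have e1 := congrArg Prod.fst he
      have e2 := congrArg Prod.snd he
      simp only [Prod.fst_add, Prod.snd_add] at e1 e2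
      linear_combination u.2 * e1 - u.1 * e2 + hb'.2 + hlev a ha - hlev a' ha'
    constructor
    · rw [Finsupp.mem_support_iff, AddMonoidAlgebra.coeff_mul_add_of_uniqueAdd hua]
      exact mul_ne_zero (Finsupp.mem_support_iff.1 ha) (Finsupp.mem_support_iff.1 hb'.1)
    · simp only [Prod.fst_add, Prod.snd_add]
      linear_combination hb'.2 + hlev a ha - hlev a0 ha0
  obtain ⟨p1, h1, p2, h2, hne, u1, u2⟩ :=
    TwoUniqueSums.uniqueAdd_of_one_lt_card (A := h.coeff.support) (B := B) (by nlinarith)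
  rw [Finset.mem_product] at h1 h2
  have k1 := hu _ _ h1.1 h1.2 u1
  have k2 := hu _ _ h2.1 h2.2 u2
  by_cases he : p1.1 + p1.2 = a0 + b0
  · refine ⟨_, k2.1, ?_, k2.2⟩
    intro he2
    obtain ⟨x, y⟩ := u1 h2.1 h2.2 (he2.trans he.symm)
    exact hne (Prod.ext x.symm y.symm)
  · exact ⟨_, k1.1, he, k1.2⟩

/-- if g(X) has at least two terms, Y − g(X) has no line polynomial factors. -/
theorem additive_ca_no_line_factors (p : ℕ) [Fact p.Prime] (g : LP (ZMod p))
    (hsupp : ∀ m ∈ g.coeff.support, m.2 = 0) (hcard : 2 ≤ g.coeff.support.card) :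
    ¬ ∃ (h : LP (ZMod p)) (u : ℤ × ℤ), u ≠ 0 ∧ IsLinePoly u h ∧
      h ∣ (AddMonoidAlgebra.single ((0:ℤ),(1:ℤ)) 1 - g) := by
  classical
  rintro ⟨h, u, hu, hl, q, hq⟩
  have key := line_partner h q u hl
  rw [← hq] at key
  have hf : ∀ m : ℤ × ℤ, m ∈ (AddMonoidAlgebra.single ((0:ℤ),(1:ℤ)) (1 : ZMod p) - g).coeff.support →
      m = (0, 1) ∨ m.2 = 0 := by
    intro m hm
    by_cases h1 : m = (0, 1)
    · exact Or.inl h1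
    · right
      apply hsupp
      rw [Finsupp.mem_support_iff] at hm ⊢
      intro h0
      apply hm
      simp [AddMonoidAlgebra.coeff_single, Finsupp.single_apply, h0, Ne.symm h1]
  have hY : ((0:ℤ), (1:ℤ)) ∈ (AddMonoidAlgebra.single ((0:ℤ),(1:ℤ)) (1 : ZMod p) - g).coeff.support := by
    have h0 : g.coeff (0, 1) = 0 := by
      by_contra hh
      have := hsupp _ (Finsupp.mem_support_iff.2 hh)
      simp at this
    rw [Finsupp.mem_support_iff]
    simp [AddMonoidAlgebra.coeff_single, h0]
  have hg : ∀ m ∈ g.coeff.support,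
      m ∈ (AddMonoidAlgebra.single ((0:ℤ),(1:ℤ)) (1 : ZMod p) - g).coeff.support := by
    intro m hm
    have h2 := hsupp m hm
    have h1 : ((0:ℤ), (1:ℤ)) ≠ m := by rintro rfl; simp at h2
    rw [Finsupp.mem_support_iff] at hm ⊢
    simpa [AddMonoidAlgebra.coeff_single, Finsupp.single_apply, h1] using hm
  have hu2 : u.2 ≠ 0 := by
    intro h0
    obtain ⟨m, hm, hne, he⟩ := key _ hY
    rcases hf m hm with h | h
    · exact hne h
    · apply hu
      simp only [h, h0] at he
      exact Prod.ext (by simp only [Prod.fst_zero]; linarith) h0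
  have hlev : ∀ m ∈ g.coeff.support, m.1 * u.2 = - u.1 := by
    intro m hm
    have h2 := hsupp m hm
    obtain ⟨m', hm', hne, he⟩ := key _ (hg m hm)
    rcases hf m' hm' with h | h
    · subst h
      simp only [h2] at he
      linarith
    · exfalso
      apply hne
      simp only [h, h2, zero_mul, sub_zero] at he
      exact Prod.ext (mul_right_cancel₀ hu2 he) (h.trans h2.symm)
  obtain ⟨a, ha, b, hb, hab⟩ := Finset.one_lt_card.1 hcard
  apply hab
  exact Prod.ext (mul_right_cancel₀ hu2 ((hlev a ha).trans (hlev b hb).symm))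
    ((hsupp a ha).trans (hsupp b hb).symm)
end

section
/- Every low complexity configuration in the 4-dot system is periodic: if c : ℤ² → F₂ satisfies c(i,j) + c(i+1,j) + c(i,j+1) + c(i+1,j+1) = 0 for all (i,j) ∈ ℤ², and there is a finite nonempty D ⊆ ℤ² such that the number of distinct D-patterns of c is at most |D|, then c is periodic. -/
/-- One-dimensional lemma: affine relation between shifts forces periodicity. -/
theorem oneD (u : ℤ → ℚ) (hu : (Set.range u).Finite)
    (hnp : ∀ p : ℤ, p ≠ 0 → ¬ ∀ n, u (n + p) = u n)
    (F : Finset ℤ) (w : ℤ → ℚ) (K : ℚ)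
    (h : ∀ s, ∑ i ∈ F, w i * u (s + i) = K) : ∀ i ∈ F, w i = 0 := by
  classical
  by_contra! hne
  obtain ⟨i0, hi0, hw0⟩ := hne
  set G := F.filter (fun i => w i ≠ 0) with hG
  have hGne : G.Nonempty := ⟨i0, by simp [hG, hi0, hw0]⟩
  have hGsum : ∀ s, ∑ i ∈ G, w i * u (s + i) = K := by
    intro s
    rw [← h s, hG]
    apply Finset.sum_subset (Finset.filter_subset _ _)
    intro x hx hx'
    have : w x = 0 := by
      by_contra hh
      exact hx' (by simp [hx, hh])
    simp [this]
  have step : ∀ e ∈ G, ∀ s t : ℤ, (∀ i ∈ G, i ≠ e → u (s + i) = u (t + i)) →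
      u (s + e) = u (t + e) := by
    intro e he s t hst
    have h1 := hGsum s
    have h2 := hGsum t
    rw [← Finset.add_sum_erase G _ he] at h1 h2
    have h3 : ∑ i ∈ G.erase e, w i * u (s + i) = ∑ i ∈ G.erase e, w i * u (t + i) := by
      apply Finset.sum_congr rfl
      intro i hi
      rw [hst i (Finset.mem_of_mem_erase hi) (Finset.ne_of_mem_erase hi)]
    have hwe : w e ≠ 0 := (Finset.mem_filter.1 he).2
    have h4 : w e * u (s + e) = w e * u (t + e) := by linarith
    exact mul_left_cancel₀ hwe h4
  set l := G.min' hGne with hl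
  set m := G.max' hGne with hm
  have hlG : l ∈ G := G.min'_mem hGne
  have hmG : m ∈ G := G.max'_mem hGne
  have hlb : ∀ i ∈ G, l ≤ i := fun i hi => G.min'_le i hi
  have hub : ∀ i ∈ G, i ≤ m := fun i hi => G.le_max' i hi
  have fwd : ∀ s t : ℤ, (∀ k, l ≤ k → k ≤ m → u (s + k) = u (t + k)) →
      (∀ k, l ≤ k → k ≤ m → u (s + 1 + k) = u (t + 1 + k)) := by
    intro s t hst
    have key : ∀ k, l ≤ k → k < m → u (s + 1 + k) = u (t + 1 + k) := by
      intro k hk1 hk2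
      have := hst (k + 1) (by omega) (by omega)
      rwa [show s + 1 + k = s + (k + 1) by ring, show t + 1 + k = t + (k + 1) by ring]
    intro k hk1 hk2
    rcases lt_or_eq_of_le hk2 with hlt | rfl
    · exact key k hk1 hlt
    · exact step _ hmG _ _ fun i hi hne => key i (hlb i hi) (lt_of_le_of_ne (hub i hi) hne)
  have bwd : ∀ s t : ℤ, (∀ k, l ≤ k → k ≤ m → u (s + k) = u (t + k)) →
      (∀ k, l ≤ k → k ≤ m → u (s - 1 + k) = u (t - 1 + k)) := by
    intro s t hst
    have key : ∀ k, l < k → k ≤ m → u (s - 1 + k) = u (t - 1 + k) := by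
      intro k hk1 hk2
      have := hst (k - 1) (by omega) (by omega)
      rwa [show s - 1 + k = s + (k - 1) by ring, show t - 1 + k = t + (k - 1) by ring]
    intro k hk1 hk2
    rcases lt_or_eq_of_le hk1 with hlt | heq
    · exact key k hlt hk2
    · rw [← heq]
      exact step _ hlG _ _ fun i hi hne =>
        key i (lt_of_le_of_ne (hlb i hi) (Ne.symm hne)) (hub i hi)
  -- pigeonhole
  haveI : Finite (Set.range u) := hu
  let W : ℤ → (Finset.Icc l m → Set.range u) := fun s k => ⟨u (s + k.1), ⟨_, rfl⟩⟩
  obtain ⟨s, t, hne, hW⟩ := Finite.exists_ne_map_eq_of_infinite W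
  have hst : ∀ k, l ≤ k → k ≤ m → u (s + k) = u (t + k) := by
    intro k h1 h2
    have := congrFun hW ⟨k, Finset.mem_Icc.2 ⟨h1, h2⟩⟩
    exact congrArg Subtype.val this
  have all : ∀ n : ℤ, ∀ k, l ≤ k → k ≤ m → u (s + n + k) = u (t + n + k) := by
    intro n
    induction n using Int.induction_on with
    | zero => simpa using hst
    | succ n ih =>
      have := fwd _ _ ih
      simpa only [add_assoc] using this
    | pred n ih =>
      have := bwd _ _ ih
      simpa only [add_sub_assoc] using this
  refine hnp (s - t) (sub_ne_zero.2 hne) fun n => ?_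
  have := all (n - t - l) l le_rfl (hlb m hmG)
  rw [show n + (s - t) = s + (n - t - l) + l by ring, this]
  congr 1
  ring

/-- The sign character of `ZMod 2`. -/
def sgn2 (x : ZMod 2) : ℚ := if x = 0 then 1 else -1

theorem sgn2_add (x y : ZMod 2) : sgn2 (x + y) = sgn2 x * sgn2 y := by
  unfold sgn2
  have : ∀ x : ZMod 2, x = 0 ∨ x = 1 := by decide
  have h11 : (1 + 1 : ZMod 2) = 0 := by decide
  rcases this x with rfl | rfl <;> rcases this y with rfl | rfl <;> simp [h11]

theorem sgn2_inj {x y : ZMod 2} (h : sgn2 x = sgn2 y) : x = y := by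
  unfold sgn2 at h
  have : ∀ x : ZMod 2, x = 0 ∨ x = 1 := by decide
  rcases this x with rfl | rfl <;> rcases this y with rfl | rfl <;> norm_num at h <;> rfl

theorem sgn2_ne (x : ZMod 2) : sgn2 x ≠ 0 := by
  unfold sgn2
  split_ifs <;> norm_num

theorem sgn2_range (f : ℤ → ZMod 2) : (Set.range fun i => sgn2 (f i)).Finite :=
  (Set.finite_range sgn2).subset (by rintro _ ⟨i, rfl⟩; exact ⟨_, rfl⟩)

theorem four_dot_split (c : ℤ × ℤ → ZMod 2)
    (hc : ∀ i j : ℤ, c (i, j) + c (i + 1, j) + c (i, j + 1) + c (i + 1, j + 1) = 0)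
    (i j : ℤ) : c (i, j) = c (i, 0) + (c (0, j) + c (0, 0)) := by
  have aux : ∀ x y z w p q : ZMod 2, x + y + z + w = 0 → x + z = p + q → y + w = p + q := by
    decide
  have aux2 : ∀ x y z w p q : ZMod 2, x + y + z + w = 0 → y + w = p + q → x + z = p + q := by
    decide
  have h1 : ∀ i j : ℤ, c (i, j) + c (i, j + 1) = c (0, j) + c (0, j + 1) := by
    intro i j
    induction i using Int.induction_on with
    | zero => rfl
    | succ n ih => exact aux _ _ _ _ _ _ (hc n j) ih
    | pred n ih =>
      have h := hc (-n - 1) j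
      rw [sub_add_cancel] at h
      exact aux2 _ _ _ _ _ _ h ih
  have aux3 : ∀ x y p q a b : ZMod 2, x + y = p + q → x = a + (p + b) → y = a + (q + b) := by
    decide
  have aux4 : ∀ x y p q a b : ZMod 2, x + y = p + q → y = a + (q + b) → x = a + (p + b) := by
    decide
  induction j using Int.induction_on with
  | zero =>
    have : ∀ x y : ZMod 2, x = x + (y + y) := by decide
    exact this _ _
  | succ n ih => exact aux3 _ _ _ _ _ _ (h1 i n) ih
  | pred n ih =>
    have h := h1 i (-n - 1)
    rw [sub_add_cancel] at h
    exact aux4 _ _ _ _ _ _ h ih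

/-- Low complexity gives an affine relation. -/
theorem exists_relation (c : ℤ × ℤ → ZMod 2) (D : Finset (ℤ × ℤ))
    (h : (Patterns c D).ncard ≤ D.card) :
    ∃ (k : ℚ) (g : ℤ × ℤ → ℚ), (k ≠ 0 ∨ ∃ d ∈ D, g d ≠ 0) ∧
      ∀ t, k + ∑ d ∈ D, g d * sgn2 (c (t + d)) = 0 := by
  classical
  haveI : Fintype (Patterns c D) := Fintype.ofFinite _
  let L : (Option D → ℚ) →ₗ[ℚ] (Patterns c D → ℚ) :=
    { toFun := fun x P => x none + ∑ d : D, x (some d) * sgn2 (P.1 d)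
      map_add' := by
        intro x y
        ext P
        simp only [Pi.add_apply, add_mul, Finset.sum_add_distrib]
        ring
      map_smul' := by
        intro r x
        ext P
        simp only [Pi.smul_apply, smul_eq_mul, RingHom.id_apply, mul_add, Finset.mul_sum,
          mul_assoc] }
  have hdim : Module.finrank ℚ (Patterns c D → ℚ) < Module.finrank ℚ (Option D → ℚ) := by
    rw [Module.finrank_fintype_fun_eq_card, Module.finrank_fintype_fun_eq_card,
      Fintype.card_option, Fintype.card_coe, ← Nat.card_eq_fintype_card]
    exact Nat.lt_succ_of_le h
  obtain ⟨x, hx, hx0⟩ := (Submodule.ne_bot_iff _).1 (LinearMap.ker_ne_bot_of_finrank_lt (f := L) hdim)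
  refine ⟨x none, fun d => if hd : d ∈ D then x (some ⟨d, hd⟩) else 0, ?_, ?_⟩
  · by_contra! hcon
    apply hx0
    ext o
    rcases o with _ | ⟨d, hd⟩
    · exact hcon.1
    · have := hcon.2 d hd
      simpa [hd] using this
  · intro t
    have h1 : L x = 0 := hx
    have h2 := congrFun h1 ⟨_, ⟨t, rfl⟩⟩
    simp only [L, LinearMap.coe_mk, AddHom.coe_mk, Pi.zero_apply] at h2
    rw [← h2, ← Finset.sum_coe_sort D]
    simp

/-- every low complexity configuration in the 4-dot system is periodic. -/
theorem four_dot_nivat (c : ℤ × ℤ → ZMod 2)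
    (hc : ∀ i j : ℤ, c (i, j) + c (i + 1, j) + c (i, j + 1) + c (i + 1, j + 1) = 0)
    (hlc : LowComplexity c) : Periodic c := by
  classical
  by_contra hper
  obtain ⟨D, -, hD⟩ := hlc
  obtain ⟨k, g, hne, hrel⟩ := exists_relation c D hD
  have hsplit := four_dot_split c hc
  let u : ℤ → ℚ := fun i => sgn2 (c (i, 0))
  let v : ℤ → ℚ := fun j => sgn2 (c (0, j) + c (0, 0))
  have huv : ∀ i j, sgn2 (c (i, j)) = u i * v j := by
    intro i j
    rw [hsplit i j, sgn2_add]
  have hu : ∀ p : ℤ, p ≠ 0 → ¬ ∀ n, u (n + p) = u n := by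
    intro p hp hh
    refine hper ⟨(p, 0), by simpa using hp, ?_⟩
    rintro ⟨i, j⟩
    apply sgn2_inj
    rw [Prod.mk_add_mk, add_zero, huv, huv, hh]
  have hv : ∀ p : ℤ, p ≠ 0 → ¬ ∀ n, v (n + p) = v n := by
    intro p hp hh
    refine hper ⟨(0, p), by simpa using hp, ?_⟩
    rintro ⟨i, j⟩
    apply sgn2_inj
    rw [Prod.mk_add_mk, add_zero, huv, huv, hh]
  let A := D.image Prod.fst
  let B := D.image Prod.snd
  let g' : ℤ × ℤ → ℚ := fun d => if d ∈ D then g d else 0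
  have hsub : D ⊆ A ×ˢ B := by
    intro d hd
    exact Finset.mem_product.2 ⟨Finset.mem_image_of_mem _ hd, Finset.mem_image_of_mem _ hd⟩
  have hsum : ∀ s t, ∑ j ∈ B, (∑ i ∈ A, g' (i, j) * u (s + i)) * v (t + j) = -k := by
    intro s t
    have h1 : ∑ d ∈ D, g d * sgn2 (c ((s, t) + d))
        = ∑ d ∈ A ×ˢ B, g' d * (u (s + d.1) * v (t + d.2)) := by
      rw [← Finset.sum_subset hsub]
      · apply Finset.sum_congr rfl
        rintro ⟨i, j⟩ hd
        simp only [g', hd, if_true, Prod.mk_add_mk, huv]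
      · intro d _ hd
        simp [g', hd]
    have h2 := hrel (s, t)
    rw [h1, Finset.sum_product_right] at h2
    simp only [Finset.sum_mul, mul_assoc]
    linarith
  have hmu : ∀ s, ∀ j ∈ B, ∑ i ∈ A, g' (i, j) * u (s + i) = 0 := fun s =>
    oneD v (sgn2_range _) hv B _ _ (hsum s)
  have hg : ∀ j ∈ B, ∀ i ∈ A, g' (i, j) = 0 := fun j hj =>
    oneD u (sgn2_range _) hu A (fun i => g' (i, j)) 0 fun s => hmu s j hj
  have hg0 : ∀ d ∈ D, g d = 0 := by
    intro d hd
    have hm := Finset.mem_product.1 (hsub hd)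
    have := hg d.2 hm.2 d.1 hm.1
    simpa [g', hd] using this
  rcases hne with hk | ⟨d, hd, hgd⟩
  · apply hk
    have h2 := hrel 0
    rw [Finset.sum_eq_zero (fun d hd => by rw [hg0 d hd, zero_mul])] at h2
    simpa using h2
  · exact hgd (hg0 d hd)
end

section
/- Let c : ℤ² → F₂ satisfy c(i,j) + c(i+1,j) + c(i,j+1) + c(i+1,j+1) = 0 for all (i,j) ∈ ℤ², and let c' : ℤ² → ℤ be the configuration obtained by renaming 0_{F₂} ↦ 0 and 1_{F₂} ↦ 1. If some nonzero Laurent polynomial over ℤ annihilates c', then c is periodic. -/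
lemma fd_const {α : Type*} (g : ℤ → α) (hg : ∀ n, g (n + 1) = g n) (n : ℤ) : g n = g 0 := by
  induction n using Int.induction_on with
  | zero => rfl
  | succ k ih => rw [hg]; exact ih
  | pred k ih =>
    have := hg (-(k : ℤ) - 1)
    rw [sub_add_cancel] at this
    rw [← this]; exact ih

/-- A solution of a homogeneous linear recurrence vanishing on a window vanishes. -/
lemma fd_vanish (D h : ℤ → ℤ) (S : Finset ℤ) (hS : S.Nonempty) (hh : ∀ m ∈ S, h m ≠ 0)
    (hD : ∀ n, ∑ m ∈ S, h m * D (n - m) = 0) (L : ℕ) (hL : (L : ℤ) = S.max' hS - S.min' hS)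
    (s : ℤ) (hs : ∀ i : ℕ, i < L → D (s + i) = 0) (n : ℤ) : D n = 0 := by
  have up : ∀ t : ℤ, (∀ i : ℕ, i < L → D (t + i) = 0) → D (t + L) = 0 := by
    intro t ht
    have h1 := hD (t + L + S.min' hS)
    rw [Finset.sum_eq_single_of_mem (S.min' hS) (S.min'_mem hS)] at h1
    · have := (mul_eq_zero.1 h1).resolve_left (hh _ (S.min'_mem hS))
      rwa [add_sub_cancel_right] at this
    · intro m hm hne
      have h2 := S.min'_le m hm
      have h3 := S.le_max' m hm
      have h4 := ht (L + S.min' hS - m).toNat (by omega)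
      have h5 : t + L + S.min' hS - m = t + ((L + S.min' hS - m).toNat : ℕ) := by omega
      rw [h5, h4, mul_zero]
  have down : ∀ t : ℤ, (∀ i : ℕ, i < L → D (t + i) = 0) → D (t - 1) = 0 := by
    intro t ht
    have h1 := hD (t - 1 + S.max' hS)
    rw [Finset.sum_eq_single_of_mem (S.max' hS) (S.max'_mem hS)] at h1
    · have := (mul_eq_zero.1 h1).resolve_left (hh _ (S.max'_mem hS))
      rwa [add_sub_cancel_right] at this
    · intro m hm hne
      have h2 := S.min'_le m hm
      have h3 := S.le_max' m hm
      have h4 := ht (S.max' hS - m - 1).toNat (by omega)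
      have h5 : t - 1 + S.max' hS - m = t + ((S.max' hS - m - 1).toNat : ℕ) := by omega
      rw [h5, h4, mul_zero]
  have all : ∀ k : ℤ, ∀ i : ℕ, i < L → D (s + k + i) = 0 := by
    intro k
    induction k using Int.induction_on with
    | zero => simpa using hs
    | succ k ih =>
      intro i hi
      have e : s + ((k : ℤ) + 1) + i = s + k + ((i + 1 : ℕ) : ℤ) := by push_cast; ring
      rw [e]
      rcases Nat.lt_or_ge (i + 1) L with h1 | h1
      · exact ih _ h1
      · have : i + 1 = L := by omega
        rw [this]; exact up _ ih
    | pred k ih =>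
      intro i hi
      rcases Nat.eq_zero_or_pos i with h0 | h0
      · have := down _ ih
        subst h0
        rw [← this]; congr 1; push_cast; ring
      · have := ih (i - 1) (by omega)
        rw [← this]; congr 1; omega
  have := up (n - L) (fun i hi => by
    have := all (n - L - s) i hi
    rw [← this]; congr 1; ring)
  simpa using this

lemma fd_periodic (a : ℤ → ZMod 2) (h : ℤ → ℤ) (S : Finset ℤ) (K : ℤ)
    (hh : ∃ m ∈ S, h m ≠ 0)
    (hA : ∀ n, ∑ m ∈ S, h m * (1 - 2 * ((a (n - m)).val : ℤ)) = K) :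
    ∃ p : ℤ, p ≠ 0 ∧ ∀ n, a (n + p) = a n := by
  classical
  set T := S.filter (fun m => h m ≠ 0) with hT
  have hTne : T.Nonempty := by
    obtain ⟨m, hm, h0⟩ := hh
    exact ⟨m, by simp [hT, hm, h0]⟩
  have hA' : ∀ n, ∑ m ∈ T, h m * (1 - 2 * ((a (n - m)).val : ℤ)) = K := by
    intro n
    rw [← hA n]
    apply Finset.sum_subset (Finset.filter_subset _ _)
    intro m hm hmT
    have : h m = 0 := by
      by_contra h0
      exact hmT (by simp [hT, hm, h0])
    rw [this, zero_mul]
  set L : ℕ := (T.max' hTne - T.min' hTne).toNat with hLdef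
  have hL : (L : ℤ) = T.max' hTne - T.min' hTne := by
    have := T.min'_le _ (T.max'_mem hTne)
    omega
  obtain ⟨s, t, hst, hW⟩ := Finite.exists_ne_map_eq_of_infinite
    (fun s : ℤ => fun i : Fin L => a (s + (i : ℕ)))
  refine ⟨t - s, by omega, ?_⟩
  intro n
  have key := fd_vanish
    (fun n => (1 - 2 * ((a (n + (t - s))).val : ℤ)) - (1 - 2 * ((a n).val : ℤ))) h T hTne
    (fun m hm => (Finset.mem_filter.1 hm).2)
    (fun n => by
      simp only [mul_sub (h _) (1 - _) (1 - _)]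
      rw [Finset.sum_sub_distrib, hA' n, sub_eq_zero, ← hA' (n + (t - s))]
      apply Finset.sum_congr rfl
      intro m _
      rw [sub_add_eq_add_sub]) L hL s
    (fun i hi => by
      have := congrFun hW ⟨i, hi⟩
      simp only at this
      have e : s + (i : ℤ) + (t - s) = t + i := by ring
      simp only [e, this, sub_self]) n
  apply ZMod.val_injective
  omega

theorem four_dot_int_annihilator_periodic (c : ℤ × ℤ → ZMod 2)
    (hc : ∀ i j : ℤ, c (i, j) + c (i + 1, j) + c (i, j + 1) + c (i + 1, j + 1) = 0)
    (h : ∃ f : LP ℤ, f ≠ 0 ∧ Annihilates f (fun n => ((c n).val : ℤ))) :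
    Periodic c := by
  classical
  obtain ⟨f, hf, hann⟩ := h
  have z4 : ∀ x y z w : ZMod 2, x + y + z + w = 0 → w + y = z + x := by decide
  have z3 : ∀ x y z w : ZMod 2, x + y = z + w → x + z = y + w := by decide
  have z5 : ∀ x y z : ZMod 2, x + y = z → x = y + z := by decide
  have z6 : ∀ x y : ZMod 2, 1 - 2 * ((x + y).val : ℤ) =
    (1 - 2 * (x.val : ℤ)) * (1 - 2 * (y.val : ℤ)) := by decide
  have h1 : ∀ i j, c (i, j + 1) + c (i, j) = c (0, j + 1) + c (0, j) := fun i j =>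
    fd_const (fun i => c (i, j + 1) + c (i, j)) (fun i => z4 _ _ _ _ (hc i j)) i
  have h2 : ∀ i j, c (i, j) + c (0, j) = c (i, 0) + c (0, 0) := fun i j =>
    fd_const (fun j => c (i, j) + c (0, j)) (fun j => z3 _ _ _ _ (h1 i j)) j
  obtain ⟨a, b, hab⟩ : ∃ a b : ℤ → ZMod 2, ∀ i j, c (i, j) = a i + b j :=
    ⟨fun i => c (i, 0) + c (0, 0), fun j => c (0, j), fun i j => by
      rw [add_comm]; exact z5 _ _ _ (h2 i j)⟩
  set S1 := f.coeff.support.image Prod.fst with hS1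
  set S2 := f.coeff.support.image Prod.snd with hS2
  have hsub : f.coeff.support ⊆ S1 ×ˢ S2 := by
    intro m hm
    exact Finset.mem_product.2 ⟨Finset.mem_image_of_mem _ hm, Finset.mem_image_of_mem _ hm⟩
  set K : ℤ := ∑ m ∈ f.coeff.support, f.coeff m with hK
  have hsum : ∀ n1 n2 : ℤ, ∑ m1 ∈ S1, (∑ m2 ∈ S2, f.coeff (m1, m2) *
      (1 - 2 * ((b (n2 - m2)).val : ℤ))) * (1 - 2 * ((a (n1 - m1)).val : ℤ)) = K := by
    intro n1 n2
    have e1 : ∑ m ∈ f.coeff.support, f.coeff m * (1 - 2 * ((c ((n1, n2) - m)).val : ℤ)) = K := by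
      have := hann (n1, n2)
      simp only at this
      have e : ∀ m, f.coeff m * (1 - 2 * ((c ((n1, n2) - m)).val : ℤ)) =
        f.coeff m - 2 * (f.coeff m * ((c ((n1, n2) - m)).val : ℤ)) := fun m => by ring
      simp only [e]
      rw [Finset.sum_sub_distrib, ← Finset.mul_sum, this]
      simp [hK]
    rw [← e1, Finset.sum_subset hsub (by
      intro m _ hm
      rw [Finsupp.notMem_support_iff.1 hm, zero_mul]), Finset.sum_product]
    apply Finset.sum_congr rfl
    intro m1 _
    rw [Finset.sum_mul]
    apply Finset.sum_congr rfl
    intro m2 _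
    rw [Prod.mk_sub_mk, hab, z6]
    ring
  by_cases hcase : ∃ n2, ∃ m1 ∈ S1, ∑ m2 ∈ S2, f.coeff (m1, m2) *
      (1 - 2 * ((b (n2 - m2)).val : ℤ)) ≠ 0
  · obtain ⟨n2, hn2⟩ := hcase
    obtain ⟨p, hp, hper⟩ := fd_periodic a _ S1 K hn2 (fun n1 => hsum n1 n2)
    refine ⟨(p, 0), by simpa using hp, ?_⟩
    rintro ⟨i, j⟩
    simp only [Prod.mk_add_mk, hab, hper, add_zero]
  · push Not at hcase
    have : f.coeff ≠ 0 := by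
      intro h0
      apply hf
      ext m
      simp [h0]
    obtain ⟨⟨m1, m2⟩, hm⟩ := Finsupp.support_nonempty_iff.2 this
    obtain ⟨p, hp, hper⟩ := fd_periodic b (fun m2 => f.coeff (m1, m2)) S2 0
      ⟨m2, Finset.mem_image_of_mem Prod.snd hm, Finsupp.mem_support_iff.1 hm⟩
      (fun n => hcase n m1 (Finset.mem_image_of_mem Prod.fst hm))
    refine ⟨(0, p), by simpa using hp, ?_⟩
    rintro ⟨i, j⟩
    simp only [Prod.mk_add_mk, hab, hper, add_zero]
end

section
/- There exists a configuration c : ℤ² → F₂ that satisfies c(i,j) + c(i+2,j) + c(i,j+2) + c(i+2,j+2) = 0 for all (i,j) ∈ ℤ² (i.e., c is annihilated by (1+X²)(1+Y²) over F₂), is not periodic, and has low complexity: there is a finite nonempty D ⊆ ℤ² such that the number of distinct D-patterns of c is strictly less than |D|. -/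
/-- The configuration: a dotted horizontal line on the even-even sublattice and a dotted
vertical line on the odd-odd sublattice. -/
def crossConf (n : ℤ × ℤ) : ZMod 2 :=
  if (n.1 % 2 = 0 ∧ n.2 = 0) ∨ (n.1 = 1 ∧ n.2 % 2 = 1) then 1 else 0

/-- The shape: a three by three square of even points. -/
def crossShape : Finset (ℤ × ℤ) := ({0, 2, 4} : Finset ℤ) ×ˢ ({0, 2, 4} : Finset ℤ)

/-- Indices of the possible patterns. -/
def crossIdx : Finset (ℤ × ℤ) :=
  {(-1, -1), (0, -1), (2, -1), (4, -1), (-1, 0), (-1, 2), (-1, 4)}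

/-- The pattern with a given index. -/
def crossPat (p : ℤ × ℤ) : crossShape → ZMod 2 :=
  fun d => if d.1.2 = p.1 ∨ d.1.1 = p.2 then 1 else 0

theorem crossPatterns_subset :
    Patterns crossConf crossShape ⊆ crossPat '' (crossIdx : Set (ℤ × ℤ)) := by
  rintro _ ⟨⟨a, b⟩, rfl⟩
  have key : ∀ p ∈ crossIdx,
      (∀ x y : ℤ, (x = 0 ∨ x = 2 ∨ x = 4) → (y = 0 ∨ y = 2 ∨ y = 4) →
        ((y = p.1 ∨ x = p.2) ↔
          (((a + x) % 2 = 0 ∧ b + y = 0) ∨ (a + x = 1 ∧ (b + y) % 2 = 1)))) →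
      (fun d : crossShape => crossConf ((a, b) + d.1)) ∈
        crossPat '' (crossIdx : Set (ℤ × ℤ)) := by
    intro p hp h
    refine ⟨p, hp, ?_⟩
    funext ⟨⟨x, y⟩, hd⟩
    simp only [crossShape, Finset.mem_product, Finset.mem_insert, Finset.mem_singleton] at hd
    simp only [crossPat, crossConf, Prod.mk_add_mk]
    exact if_congr (h x y hd.1 hd.2) rfl rfl
  by_cases h1 : a % 2 = 0 ∧ (-b = 0 ∨ -b = 2 ∨ -b = 4)
  · refine key (-b, -1) ?_ ?_
    · rcases h1.2 with h | h | h <;> rw [h] <;> decide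
    · intro x y hx hy
      dsimp only
      omega
  · by_cases h2 : b % 2 = 1 ∧ (1 - a = 0 ∨ 1 - a = 2 ∨ 1 - a = 4)
    · refine key (-1, 1 - a) ?_ ?_
      · rcases h2.2 with h | h | h <;> rw [h] <;> decide
      · intro x y hx hy
        dsimp only
        omega
    · refine key (-1, -1) (by decide) ?_
      intro x y hx hy
      dsimp only
      omega

theorem crossConf_eq_one_iff (x y : ℤ) :
    crossConf (x, y) = 1 ↔ (x % 2 = 0 ∧ y = 0) ∨ (x = 1 ∧ y % 2 = 1) := by
  unfold crossConf
  split_ifs with h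
  · simpa using h
  · simpa using h

/-- the subshift of (1+X²)(1+Y²) contains a non-periodic low complexity
configuration. -/
theorem square_sublattice_counterexample :
    ∃ c : ℤ × ℤ → ZMod 2,
      (∀ i j : ℤ, c (i, j) + c (i + 2, j) + c (i, j + 2) + c (i + 2, j + 2) = 0) ∧
      ¬ Periodic c ∧
      ∃ D : Finset (ℤ × ℤ), D.Nonempty ∧ (Patterns c D).ncard < D.card := by
  refine ⟨crossConf, ?_, ?_, crossShape, ⟨(0, 0), by decide⟩, ?_⟩
  · intro i j
    simp only [crossConf]
    split_ifs <;> first | (exfalso; omega) | decide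
  · rintro ⟨⟨a, b⟩, hne, h⟩
    have e0 := h (0, 0)
    have e1 := h (1, 1)
    have e2 := h (2, 0)
    simp only [Prod.mk_add_mk] at e0 e1 e2
    rw [(crossConf_eq_one_iff 0 0).2 (by omega), crossConf_eq_one_iff] at e0
    rw [(crossConf_eq_one_iff 1 1).2 (by omega), crossConf_eq_one_iff] at e1
    rw [(crossConf_eq_one_iff 2 0).2 (by omega), crossConf_eq_one_iff] at e2
    apply hne
    have ha : a = 0 := by omega
    have hb : b = 0 := by omega
    rw [ha, hb]
    rfl
  · calc (Patterns crossConf crossShape).ncard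
        ≤ (crossPat '' (crossIdx : Set (ℤ × ℤ))).ncard :=
          Set.ncard_le_ncard crossPatterns_subset (crossIdx.finite_toSet.image _)
      _ ≤ (crossIdx : Set (ℤ × ℤ)).ncard := Set.ncard_image_le crossIdx.finite_toSet
      _ = crossIdx.card := Set.ncard_coe_finset _
      _ < crossShape.card := by decide
end

section
/- Let R be a finite field, let u ∈ ℤ²∖{0}, and let c : ℤ² → R be a configuration annihilated by a line polynomial in direction u over R. Then c is periodic in direction u: some nonzero integer multiple of u is a period vector of c. -/
open Polynomial in
lemma dvd_X_pow_sub_one_aux {R : Type*} [Field R] [Fintype R] (P : R[X]) (hP : P.coeff 0 ≠ 0) :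
    ∃ k : ℕ, 0 < k ∧ P ∣ X ^ k - 1 := by
  have hP0 : P ≠ 0 := by rintro rfl; simp at hP
  have hfin : Module.Finite R (AdjoinRoot P) := (AdjoinRoot.powerBasis hP0).finite
  have hF : Finite (AdjoinRoot P) := Module.finite_of_finite R
  obtain ⟨i, j, hij, he⟩ := Finite.exists_ne_map_eq_of_infinite
    (fun n : ℕ => AdjoinRoot.mk P (X ^ n))
  have hcop : IsCoprime P X := by
    refine IsCoprime.symm ((Polynomial.irreducible_X.coprime_iff_not_dvd).2 ?_)
    rwa [Polynomial.X_dvd_iff]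
  have key : ∀ i j : ℕ, i < j → AdjoinRoot.mk P (X ^ i) = AdjoinRoot.mk P (X ^ j) →
      ∃ k : ℕ, 0 < k ∧ P ∣ X ^ k - 1 := by
    intro i j hlt he
    refine ⟨j - i, by omega, ?_⟩
    have h1 : P ∣ X ^ j - X ^ i := AdjoinRoot.mk_eq_mk.1 he.symm
    have h2 : (X ^ j - X ^ i : R[X]) = X ^ i * (X ^ (j - i) - 1) := by
      rw [mul_sub, ← pow_add, mul_one, Nat.add_sub_cancel' hlt.le]
    rw [h2] at h1
    exact (hcop.pow_right).dvd_of_dvd_mul_left h1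
  rcases lt_or_gt_of_ne hij with h | h
  · exact key i j h he
  · exact key j i h he.symm

/-- Shift of configurations by `v`. -/
def shiftMap (R : Type*) [Field R] (v : ℤ × ℤ) : Module.End R (ℤ × ℤ → R) where
  toFun c := fun n => c (n - v)
  map_add' _ _ := rfl
  map_smul' _ _ := rfl

lemma shiftMap_pow {R : Type*} [Field R] (v : ℤ × ℤ) (k : ℕ) (c : ℤ × ℤ → R) (n : ℤ × ℤ) :
    (shiftMap R v ^ k) c n = c (n - k • v) := by
  induction k generalizing n with
  | zero => simp
  | succ k ih =>
    rw [pow_succ', Module.End.mul_apply]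
    change (shiftMap R v ^ k) c (n - v) = _
    rw [ih, succ_nsmul']
    congr 1
    abel

/-- over a finite field, a configuration annihilated by a line polynomial in
direction u is periodic in direction u. -/
theorem line_poly_annihilator_periodic {R : Type*} [Field R] [Fintype R]
    (u : ℤ × ℤ) (hu : u ≠ 0) (c : ℤ × ℤ → R) (f : LP R)
    (hf : IsLinePoly u f) (hc : Annihilates f c) :
    ∃ k : ℤ, k ≠ 0 ∧ IsPeriodVector c (k • u) := by
  classical
  obtain ⟨hcard, n0, hline⟩ := hf
  -- primitive vector
  have hg : Int.gcd u.1 u.2 ≠ 0 := by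
    intro h
    rw [Int.gcd_eq_zero_iff] at h
    exact hu (Prod.ext h.1 h.2)
  obtain ⟨g, v1, v2, a, b, hg0, hu1, hu2, hab⟩ : ∃ g v1 v2 a b : ℤ, g ≠ 0 ∧ u.1 = g * v1 ∧
      u.2 = g * v2 ∧ a * v1 + b * v2 = 1 := by
    obtain ⟨v1, h1⟩ := Int.gcd_dvd_left u.1 u.2
    obtain ⟨v2, h2⟩ := Int.gcd_dvd_right u.1 u.2
    have hb := Int.gcd_eq_gcd_ab u.1 u.2
    have hg' : (Int.gcd u.1 u.2 : ℤ) ≠ 0 := by exact_mod_cast hg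
    refine ⟨Int.gcd u.1 u.2, v1, v2, Int.gcdA u.1 u.2, Int.gcdB u.1 u.2, hg', h1, h2, ?_⟩
    apply mul_left_cancel₀ hg'
    linear_combination (-Int.gcdA u.1 u.2) * h1 - (Int.gcdB u.1 u.2) * h2 - hb
  set j : ℤ × ℤ → ℤ := fun m => a * m.1 + b * m.2 with hj
  have hne : f.coeff.support.Nonempty := Finset.card_pos.1 (by omega)
  obtain ⟨m0, hm0, hmin⟩ := Finset.exists_min_image f.coeff.support j hne
  have hpar : ∀ m ∈ f.coeff.support, m = m0 + (j m - j m0).toNat • (v1, v2) := by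
    intro m hm
    obtain ⟨r, hr1, hr2⟩ := hline m hm
    obtain ⟨s, hs1, hs2⟩ := hline m0 hm0
    have hcr : (m.1 - m0.1) * v2 = (m.2 - m0.2) * v1 := by
      apply mul_left_cancel₀ hg0
      have hq : ((m.1 - m0.1) * u.2 : ℤ) = (m.2 - m0.2) * u.1 := by
        have : (((m.1 - m0.1) * u.2 : ℤ) : ℚ) = ((m.2 - m0.2) * u.1 : ℤ) := by
          push_cast
          rw [hr1, hr2, hs1, hs2]; ring
        exact_mod_cast this
      rw [hu1, hu2] at hq
      linear_combination hq
    have hnn : ((j m - j m0).toNat : ℤ) = j m - j m0 :=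
      Int.toNat_of_nonneg (sub_nonneg.2 (hmin m hm))
    rw [← natCast_zsmul, hnn]
    ext
    · simp only [hj, Prod.fst_add, Prod.smul_fst, smul_eq_mul]
      linear_combination (-(m.1 - m0.1)) * hab + b * hcr
    · simp only [hj, Prod.snd_add, Prod.smul_snd, smul_eq_mul]
      linear_combination (-(m.2 - m0.2)) * hab - a * hcr
  set P : Polynomial R := ∑ m ∈ f.coeff.support,
    Polynomial.monomial (j m - j m0).toNat (f.coeff m) with hPdef
  have hP0 : P.coeff 0 ≠ 0 := by
    rw [hPdef, Polynomial.finsetSum_coeff, Finset.sum_eq_single m0]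
    · simpa using hm0
    · intro m hm hmm
      rw [Polynomial.coeff_monomial, if_neg]
      intro h0
      have := hpar m hm
      rw [h0] at this
      exact hmm (by simpa using this)
    · intro h; exact absurd hm0 h
  have hPc : Polynomial.aeval (shiftMap R (v1, v2)) P c = 0 := by
    funext n
    rw [hPdef, map_sum, LinearMap.sum_apply, Finset.sum_apply]
    rw [Pi.zero_apply, ← hc (n + m0)]
    refine Finset.sum_congr rfl fun m hm => ?_
    rw [Polynomial.aeval_monomial, Module.End.mul_apply, Module.algebraMap_end_apply,
      Pi.smul_apply, shiftMap_pow, smul_eq_mul]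
    congr 2
    conv_rhs => rw [hpar m hm]
    abel
  obtain ⟨k, hk, Q, hQ⟩ := dvd_X_pow_sub_one_aux P hP0
  have hper : ∀ n, c (n - k • (v1, v2)) = c n := by
    intro n
    have h1 : Polynomial.aeval (shiftMap R (v1, v2)) (Polynomial.X ^ k - 1 : Polynomial R) c = 0 := by
      rw [hQ, mul_comm, map_mul, Module.End.mul_apply, hPc, map_zero]
    simp only [map_sub, map_pow, Polynomial.aeval_X, map_one, LinearMap.sub_apply,
      Module.End.one_apply] at h1
    have h2 := congrFun h1 n
    rw [Pi.sub_apply, shiftMap_pow, Pi.zero_apply, sub_eq_zero] at h2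
    exact h2
  have hk0 : (k : ℤ) ≠ 0 := by exact_mod_cast hk.ne'
  refine ⟨k, hk0, smul_ne_zero hk0 hu, fun n => ?_⟩
  have hp : Function.Periodic c ((k : ℤ) • (v1, v2)) := by
    intro n
    have := hper (n + (k : ℤ) • (v1, v2))
    rw [← natCast_zsmul, add_sub_cancel_right] at this
    exact this.symm
  have hu' : (k : ℤ) • u = g • ((k : ℤ) • (v1, v2)) := by
    ext
    · simp [hu1]; ring
    · simp [hu2]; ring
  rw [hu']
  exact hp.zsmul g n
end
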